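/- Let M be a manifold without boundary and π : E → M a fiber bundle with path-connected fiber. Let Δ ⊆ M be compact and contractible with the inclusion Δ ↪ M a closed cofibration, and let γ be a continuous section of π defined on a neighborhood U of Δ. Assume Δ admits a neighborhood basis B_1 ⊇ B_2 ⊇ ⋯ contained in U consisting of compact contractible sets with each inclusion B_i ↪ M a closed cofibration. Define Γ_g(E, Δ, γ) := colim_i Γ(E, B_i, γ), topologized as the colimit along the closed inclusions Γ(E, B_i, γ) ⊆ Γ(E, B_{i+1}, γ). Then the natural inclusion Γ_g(E, Δ, γ) → Γ(E, Δ, γ) is a weak homotopy equivalence. -/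

import Mathlib

/-!
The idea is to push a family of sections which agree with `γ` on `Δ` to sections which agree with
`γ` near `Δ`, relative to the parameters where this already holds.

*Deformation.* The cofibration `Δ ↪ M` yields a homotopy `h` of `M`, starting at the identity and
fixing `Δ`, whose end moves a neighborhood of `Δ` into `Δ` (`exists_deformation`). Near the compact
set `Δ` the tracks of `h` are so short that local trivializations patch to a continuous transport
`Φ` from the fiber over `h (x, t)` back to the fiber over `x`, the identity over `Δ`
(`exists_transport`).

*Compression.* For a section `s` equal to `γ` on `Δ`, the sections `x ↦ Φ (x, t, s (h (x, t)))`
walk, as `t` goes from `0` to `1`, from `s` to a section which near `Δ` depends only on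
`s|_Δ = γ|_Δ`. The walk applied to `γ` has the same end, so running it backwards leads to a section
equal to `γ` near `Δ`. A bump function on `M` extends this to global sections. If `s` equals `γ` on
a neighborhood of `Δ` containing the tracks, both walks agree at all times, so one may turn round
at any earlier time `c`; this lets a cutoff function on the parameter space interpolate to the
constant deformation (`compress_sections`).

*Compact families in the colimit.* These lie in a stage up to specialization of points, and a
family may be moved to a specialization by a homotopy that jumps at its end
(`GermSpace.exists_stage_deformation`). This avoids any separation hypothesis on the fiber.

*Homotopy groups.* Stretching the cube makes a family constant along collars of the boundary, so
that a cutoff function vanishing on the boundary is available; the two previous facts then give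
bijectivity on path components and homotopy groups (`isWeakHomotopyEquiv_of_compress`).
-/


open scoped unitInterval Topology

universe u v w

section WHE

variable {X : Type u} {Y : Type v} [TopologicalSpace X] [TopologicalSpace Y]

/-- The map induced on path components by a continuous map. -/
noncomputable def pi0Map (f : C(X, Y)) : ZerothHomotopy X → ZerothHomotopy Y :=
  Quotient.map f (fun _ _ h => ⟨h.somePath.map f.continuous⟩)

/-- The map induced on generalized loops by a continuous map. -/
def genLoopMap {N : Type} (f : C(X, Y)) {x : X} (p : GenLoop N X x) :
    GenLoop N Y (f x) :=
  ⟨f.comp p.1, fun y hy => by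
    show f (p.1 y) = f x
    rw [p.2 y hy]⟩

theorem genLoopMap_homotopic {N : Type} (f : C(X, Y)) {x : X} {p q : GenLoop N X x}
    (h : GenLoop.Homotopic p q) : GenLoop.Homotopic (genLoopMap f p) (genLoopMap f q) :=
  h.map (fun H => H.compContinuousMap f)

/-- The map induced on `n`-th homotopy groups by a continuous map. -/
noncomputable def piMap (n : ℕ) (f : C(X, Y)) (x : X) :
    HomotopyGroup (Fin n) X x → HomotopyGroup (Fin n) Y (f x) :=
  Quotient.map (genLoopMap f) (fun _ _ h => genLoopMap_homotopic f h)

/-- A map of topological spaces is a weak homotopy equivalence if it is continuous, induces a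
bijection on path components and, for every basepoint and every `n ≥ 1`, a bijection on `n`-th
homotopy groups. -/
def IsWeakHomotopyEquiv (f : X → Y) : Prop :=
  ∃ hf : Continuous f,
    Function.Bijective (pi0Map ⟨f, hf⟩) ∧
      ∀ n : ℕ, 1 ≤ n → ∀ x : X, Function.Bijective (piMap n ⟨f, hf⟩ x)

end WHE

section Cofib

/-- The inclusion of a closed subset `A ⊆ X` is a closed cofibration if it satisfies the
homotopy extension property with respect to all spaces. -/
def ClosedCofibration {X : Type u} [TopologicalSpace X] (A : Set X) : Prop :=
  IsClosed A ∧ ∀ (Z : Type u) [TopologicalSpace Z] (f : C(X, Z))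
    (h : C(A × unitInterval, Z)), (∀ a : A, h (a, 0) = f a) →
      ∃ H : C(X × unitInterval, Z), (∀ x : X, H (x, 0) = f x) ∧
        ∀ (a : A) (t : unitInterval), H (↑a, t) = h (a, t)

end Cofib

section Bundle

variable {E M : Type u} [TopologicalSpace E] [TopologicalSpace M]

/-- `π : E → M` is a fiber bundle with fiber `F`: a continuous map which is locally on `M`
trivial with fiber `F`. -/
structure IsFiberBundle (F : Type u) [TopologicalSpace F] (π : E → M) : Prop where
  continuous : Continuous π
  locTriv : ∀ x : M, ∃ U : Set M, IsOpen U ∧ x ∈ U ∧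
    ∃ e : (π ⁻¹' U) ≃ₜ (U × F), ∀ y : π ⁻¹' U, ((e y).1 : M) = π ↑y

/-- The space of continuous sections of `π : E → M`, topologized as a subspace of `C(M, E)`
with the compact-open topology. -/
abbrev SectionSpace (π : E → M) : Type u :=
  {s : C(M, E) // ∀ x : M, π (s x) = x}

/-- The closed unit ball in `ℝ^d`. -/
def closedDisk (d : ℕ) : Set (EuclideanSpace ℝ (Fin d)) :=
  Metric.closedBall 0 1

/-- A subset `Δ ⊆ M` together with (a representative of) a germ of a continuous section of
`π` on a neighborhood of `Δ`. -/
structure GermData (π : E → M) : Type u where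
  Δ : Set M
  U : Set M
  isOpen : IsOpen U
  subset : Δ ⊆ U
  sec : C(U, E)
  isSec : ∀ x : U, π (sec x) = ↑x

/-- A section has germ `g` if it agrees with the germ's section on the underlying set. -/
def GermData.Fixes {π : E → M} (g : GermData π) (s : SectionSpace π) : Prop :=
  ∀ x (hx : x ∈ g.Δ), s.1 x = g.sec ⟨x, g.subset hx⟩

/-- The space `Γ(E, Δ_0, …, Δ_k)` of sections agreeing with the given germs `γ_i` on the
sets `Δ_i`. -/
def relSections {π : E → M} {k : ℕ} (g : Fin k → GermData π) : Set (SectionSpace π) :=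
  {s | ∀ i, (g i).Fixes s}

/-- A tuple of pairs `(Δ_i, γ_i)` is disjoint if the underlying sets are pairwise disjoint. -/
def DisjTuple {π : E → M} {k : ℕ} (g : Fin k → GermData π) : Prop :=
  ∀ i j, i ≠ j → Disjoint (g i).Δ (g j).Δ

/-- A sufficiently separated collection for the bundle `π : E → M` over a `d`-dimensional
manifold `M`. -/
structure IsSuffSep (d : ℕ) {E M : Type u} [TopologicalSpace E] [TopologicalSpace M]
    (π : E → M) (W : Set (GermData π)) : Prop where
  compact : ∀ g ∈ W, IsCompact g.Δ
  contractible : ∀ g ∈ W, ContractibleSpace g.Δ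
  cofib : ∀ g ∈ W, ∃ D : Set M, Nonempty (D ≃ₜ closedDisk d) ∧ g.Δ ⊆ interior D ∧
    ClosedCofibration (X := D) (Subtype.val ⁻¹' g.Δ)
  sep : ∀ (k : ℕ) (g : Fin k → GermData π), (∀ i, g i ∈ W) →
    ∃ g' ∈ W, ∃ D : Set M, Nonempty (D ≃ₜ closedDisk d) ∧ g'.Δ ⊆ interior D ∧
      ∀ i, Disjoint D (g i).Δ

end Bundle

section Simplex

/-- The `i`-th face inclusion `Δ^p → Δ^{p+1}` of standard topological simplices. -/
def simplexFace {p : ℕ} (i : Fin (p + 2)) (t : stdSimplex ℝ (Fin (p + 1))) :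
    stdSimplex ℝ (Fin (p + 2)) :=
  ⟨i.insertNth 0 t.1, by
    constructor
    · intro x
      rcases eq_or_ne x i with rfl | hx
      · simp
      · obtain ⟨j, rfl⟩ := Fin.exists_succAbove_eq hx
        rw [Fin.insertNth_apply_succAbove]
        exact t.2.1 j
    · rw [Fin.sum_univ_succAbove _ i]
      simp only [Fin.insertNth_apply_same, Fin.insertNth_apply_succAbove, zero_add]
      exact t.2.2⟩

end Simplex

/-- The space `Γ(E, A, γ)` of sections of `π` agreeing with the section `γ` (defined on
`U ⊇ A`) on the subset `A`. -/
def fixSet {E M : Type u} [TopologicalSpace E] [TopologicalSpace M] (π : E → M)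
    {U : Set M} (γ : C(U, E)) (A : Set M) (hAU : A ⊆ U) : Set (SectionSpace π) :=
  {s | ∀ x (hx : x ∈ A), s.1 x = γ ⟨x, hAU hx⟩}

/-! ### Reparametrizing the cube -/

/-- The stretch of the unit interval about its midpoint by the factor `1 + 2t`, truncated to the
interval. At `t = 1` it sends the outer thirds to the endpoints. -/
noncomputable def stretch : C(I × I, I) where
  toFun z := Set.projIcc 0 1 zero_le_one ((1 + 2 * (z.1 : ℝ)) * ((z.2 : ℝ) - 1 / 2) + 1 / 2)
  continuous_toFun := continuous_projIcc.comp (by fun_prop)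

/-- A function vanishing at the endpoints of the unit interval and equal to `1` on its middle
third. -/
noncomputable def cutoff : C(I, I) where
  toFun s := Set.projIcc 0 1 zero_le_one (3 * min (s : ℝ) (1 - s))
  continuous_toFun := continuous_projIcc.comp (by fun_prop)

lemma stretch_zero (s : I) : stretch (0, s) = s := by
  have : (1 + 2 * ((0 : I) : ℝ)) * ((s : ℝ) - 1 / 2) + 1 / 2 = s := by simp
  show Set.projIcc 0 1 zero_le_one _ = s
  rw [this]
  exact Set.projIcc_val zero_le_one s

lemma stretch_left (t : I) : stretch (t, 0) = 0 := by
  refine Set.projIcc_of_le_left zero_le_one ?_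
  have := t.2.1
  simp only [Set.Icc.coe_zero]
  linarith

lemma stretch_right (t : I) : stretch (t, 1) = 1 := by
  refine Set.projIcc_of_right_le zero_le_one ?_
  have := t.2.1
  simp only [Set.Icc.coe_one]
  linarith

lemma cutoff_zero : cutoff 0 = 0 := by
  refine Set.projIcc_of_le_left zero_le_one ?_
  simp

lemma cutoff_one : cutoff 1 = 0 := by
  refine Set.projIcc_of_le_left zero_le_one ?_
  simp

lemma stretch_one_of_cutoff_ne (s : I) (h : cutoff s ≠ 1) :
    stretch (1, s) = 0 ∨ stretch (1, s) = 1 := by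
  by_contra hcon
  push Not at hcon
  apply h
  have h1 : ¬ ((1 + 2 * ((1 : I) : ℝ)) * ((s : ℝ) - 1 / 2) + 1 / 2 ≤ 0) :=
    fun h' => hcon.1 (Set.projIcc_of_le_left zero_le_one h')
  have h2 : ¬ (1 ≤ (1 + 2 * ((1 : I) : ℝ)) * ((s : ℝ) - 1 / 2) + 1 / 2) :=
    fun h' => hcon.2 (Set.projIcc_of_right_le zero_le_one h')
  simp only [Set.Icc.coe_one] at h1 h2
  refine Set.projIcc_of_right_le zero_le_one ?_
  rcases min_cases (s : ℝ) (1 - s) with h3 | h3 <;> rw [h3.1] <;> linarith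

/-- The coordinatewise stretch of a cube. -/
noncomputable def cubeStretch (n : ℕ) : C(I × (Fin n → I), Fin n → I) where
  toFun z i := stretch (z.1, z.2 i)
  continuous_toFun := by fun_prop

/-- The product of the cutoffs of the coordinates. -/
noncomputable def cubeCutoff (n : ℕ) : C(Fin n → I, I) where
  toFun y := ∏ i, cutoff (y i)
  continuous_toFun := by fun_prop

lemma cubeStretch_zero {n : ℕ} (y : Fin n → I) : cubeStretch n (0, y) = y :=
  funext fun i => stretch_zero (y i)

lemma cubeStretch_boundary {n : ℕ} (t : I) (y : Fin n → I) (hy : y ∈ Cube.boundary (Fin n)) :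
    cubeStretch n (t, y) ∈ Cube.boundary (Fin n) := by
  obtain ⟨i, hi⟩ := hy
  refine ⟨i, ?_⟩
  rcases hi with hi | hi
  · exact Or.inl (by show stretch (t, y i) = 0; rw [hi, stretch_left])
  · exact Or.inr (by show stretch (t, y i) = 1; rw [hi, stretch_right])

lemma cubeCutoff_boundary {n : ℕ} (y : Fin n → I) (hy : y ∈ Cube.boundary (Fin n)) :
    cubeCutoff n y = 0 := by
  obtain ⟨i, hi⟩ := hy
  refine Finset.prod_eq_zero (Finset.mem_univ i) ?_
  rcases hi with hi | hi
  · rw [hi, cutoff_zero]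
  · rw [hi, cutoff_one]

lemma cubeStretch_one_of_cutoff_ne {n : ℕ} (y : Fin n → I) (h : cubeCutoff n y ≠ 1) :
    cubeStretch n (1, y) ∈ Cube.boundary (Fin n) := by
  have h' : ∏ i, cutoff (y i) ≠ 1 := h
  obtain ⟨i, -, hi⟩ := Finset.exists_ne_one_of_prod_ne_one h'
  exact ⟨i, stretch_one_of_cutoff_ne (y i) hi⟩

/-- A generalized loop is homotopic to its precomposition with the stretch of the cube. -/
lemma genLoop_stretch {X : Type u} [TopologicalSpace X] {n : ℕ} {x : X}
    (p : GenLoop (Fin n) X x) :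
    ∃ q : GenLoop (Fin n) X x, (∀ y, q y = p (cubeStretch n (1, y))) ∧ GenLoop.Homotopic p q := by
  refine ⟨⟨⟨fun y => p.1 (cubeStretch n (1, y)), by fun_prop⟩,
    fun y hy => p.2 _ (cubeStretch_boundary 1 y hy)⟩, fun y => rfl, ⟨?_⟩⟩
  exact
    { toFun := fun z => p.1 (cubeStretch n z)
      continuous_toFun := by fun_prop
      map_zero_left := fun y => by simp [cubeStretch_zero]
      map_one_left := fun y => rfl
      prop' := fun t y hy => by
        show p.1 (cubeStretch n (t, y)) = p.1 y
        rw [p.2 _ hy, p.2 _ (cubeStretch_boundary t y hy)] }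

/-! ### A criterion for weak homotopy equivalences -/

/-- Let `f : X → Y` be injective and `X` exhausted by an increasing sequence of subsets `S k`. If
compact families in `X` can be pushed into a stage (`stage`), and families in `Y` can be pushed
into `X` without moving the parameters where a cutoff function `c` vanishes, provided that they
already lie in a stage where `c ≠ 1` (`compress`), then `f` is a weak homotopy equivalence. -/
theorem isWeakHomotopyEquiv_of_compress {X : Type u} {Y : Type v} [TopologicalSpace X]
    [TopologicalSpace Y] (f : C(X, Y)) (hf : Function.Injective f) (S : ℕ → Set X)
    (hS : Monotone S) (hSX : ∀ x, ∃ k, x ∈ S k)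
    (stage : ∀ (K : Type) [TopologicalSpace K] [CompactSpace K] (p : C(K, X)) (k : ℕ),
      ∃ m, k ≤ m ∧ ∃ q : C(K, X), (∀ y, q y ∈ S m) ∧ ∃ P : C(I × K, X),
        (∀ y, P (0, y) = p y) ∧ (∀ y, P (1, y) = q y) ∧ ∀ t y, p y ∈ S m → P (t, y) = p y)
    (compress : ∀ (K : Type) [TopologicalSpace K] (c : C(K, I)) (p : C(K, Y)) (k : ℕ),
      (∀ y, c y ≠ 1 → p y ∈ f '' S k) → ∃ (q : C(K, X)) (Q : C(I × K, Y)),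
        (∀ y, Q (0, y) = p y) ∧ (∀ y, Q (1, y) = f (q y)) ∧ ∀ t y, c y = 0 → Q (t, y) = p y) :
    IsWeakHomotopyEquiv f := by
  refine ⟨f.continuous, ⟨?_, ?_⟩, fun n _ x => ⟨?_, ?_⟩⟩
  · -- A path in `Y` between points of `X`, made constant near its endpoints, compresses to `X`.
    rintro ⟨x⟩ ⟨x'⟩ h
    obtain ⟨g⟩ : Joined (f x) (f x') := Quotient.exact h
    obtain ⟨k, hk⟩ := hSX x
    obtain ⟨k', hk'⟩ := hSX x'
    obtain ⟨q, Q, -, hQ1, hQc⟩ := compress I cutoff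
      ⟨fun t => g (stretch (1, t)), by fun_prop⟩ (max k k') (fun y hy => by
        rcases stretch_one_of_cutoff_ne y hy with h | h
        · exact ⟨x, hS (le_max_left _ _) hk, by simp [h]⟩
        · exact ⟨x', hS (le_max_right _ _) hk', by simp [h]⟩)
    refine Quotient.sound ⟨⟨q, hf ?_, hf ?_⟩⟩
    · exact (hQ1 0).symm.trans ((hQc 1 0 cutoff_zero).trans (by simp [stretch_left]))
    · exact (hQ1 1).symm.trans ((hQc 1 1 cutoff_one).trans (by simp [stretch_right]))
  · rintro ⟨y⟩
    obtain ⟨q, Q, hQ0, hQ1, -⟩ := compress Unit (ContinuousMap.const _ 1)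
      (ContinuousMap.const _ y) 0 (fun _ h => absurd rfl h)
    refine ⟨Quotient.mk _ (q ()), Quotient.sound ?_⟩
    exact Joined.symm ⟨⟨⟨fun t => Q (t, ()), by fun_prop⟩, hQ0 (), hQ1 ()⟩⟩
  · rintro ⟨p⟩ ⟨p'⟩ h
    have h' : GenLoop.Homotopic (genLoopMap f p) (genLoopMap f p') := Quotient.exact h
    -- It suffices to treat loops contained in a stage.
    obtain ⟨k₀, hx⟩ := hSX x
    have key : ∀ p : GenLoop (Fin n) X x, ∃ m, ∃ q : GenLoop (Fin n) X x,
        (∀ y, q y ∈ S m) ∧ GenLoop.Homotopic p q := by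
      intro p
      obtain ⟨m, hm, q, hq, P, hP0, hP1, hP⟩ := stage (Fin n → I) p.1 k₀
      have hfix : ∀ t, ∀ y ∈ Cube.boundary (Fin n), P (t, y) = p.1 y := fun t y hy =>
        hP t y (by rw [p.2 y hy]; exact hS hm hx)
      refine ⟨m, ⟨q, fun y hy => by rw [← hP1, hfix 1 y hy, p.2 y hy]⟩, hq, ⟨?_⟩⟩
      exact
        { toContinuousMap := P
          map_zero_left := hP0
          map_one_left := hP1
          prop' := hfix }
    obtain ⟨m, q, hq, hpq⟩ := key p
    obtain ⟨m', q', hq', hpq'⟩ := key p'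
    obtain ⟨H⟩ : GenLoop.Homotopic (genLoopMap f q) (genLoopMap f q') :=
      ((genLoopMap_homotopic f hpq).symm.trans h').trans (genLoopMap_homotopic f hpq')
    obtain ⟨r, hr, hqr⟩ := genLoop_stretch q
    obtain ⟨r', hr', hqr'⟩ := genLoop_stretch q'
    refine Quotient.sound (((hpq.trans hqr).trans ?_).trans (hpq'.trans hqr').symm)
    have H0 : ∀ y, H (0, y) = f (q y) := fun y => H.map_zero_left y
    have H1 : ∀ y, H (1, y) = f (q' y) := fun y => H.map_one_left y
    have Hb : ∀ t, ∀ y ∈ Cube.boundary (Fin n), H (t, y) = f x := fun t y hy =>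
      (H.eq_fst t hy).trans ((genLoopMap f q).2 y hy)
    obtain ⟨G, Q, -, hQ1, hQc⟩ := compress (I × (Fin n → I))
      ⟨fun z => cutoff z.1 * cubeCutoff n z.2, by fun_prop⟩
      ⟨fun z => H (stretch (1, z.1), cubeStretch n (1, z.2)), by fun_prop⟩
      (max (max m m') k₀) (fun z hz => by
        by_cases h1 : cutoff z.1 = 1
        · have h2 : cubeCutoff n z.2 ≠ 1 := fun h2 => hz (by simp [h1, h2])
          exact ⟨x, hS (le_max_right _ _) hx,
            (Hb _ _ (cubeStretch_one_of_cutoff_ne _ h2)).symm⟩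
        · rcases stretch_one_of_cutoff_ne _ h1 with h2 | h2
          · exact ⟨_, hS ((le_max_left _ _).trans (le_max_left _ _)) (hq _),
              (by simp only [ContinuousMap.coe_mk, h2, H0] : _ = f (q (cubeStretch n (1, z.2)))).symm⟩
          · exact ⟨_, hS ((le_max_right _ _).trans (le_max_left _ _)) (hq' _),
              (by simp only [ContinuousMap.coe_mk, h2, H1] : _ = f (q' (cubeStretch n (1, z.2)))).symm⟩)
    have hG : ∀ z : I × (Fin n → I), cutoff z.1 * cubeCutoff n z.2 = 0 →
        f (G z) = H (stretch (1, z.1), cubeStretch n (1, z.2)) := fun z hz =>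
      (hQ1 z).symm.trans (hQc 1 z hz)
    have hGb : ∀ t, ∀ y ∈ Cube.boundary (Fin n), G (t, y) = x := fun t y hy => hf <| by
      rw [hG _ (by simp [cubeCutoff_boundary y hy])]
      exact Hb _ _ (cubeStretch_boundary 1 y hy)
    refine ⟨?_⟩
    exact
      { toContinuousMap := G
        map_zero_left := fun y => hf <| by
          show f (G (0, y)) = f (r y)
          rw [hG _ (by simp [cutoff_zero]), hr, ← H0, stretch_left]
        map_one_left := fun y => hf <| by
          show f (G (1, y)) = f (r' y)
          rw [hG _ (by simp [cutoff_one]), hr', ← H1, stretch_right]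
        prop' := fun t y hy => (hGb t y hy).trans (r.2 y hy).symm }
  · rintro ⟨p⟩
    obtain ⟨k, hx⟩ := hSX x
    obtain ⟨r, hr, hpr⟩ := genLoop_stretch p
    obtain ⟨q, Q, hQ0, hQ1, hQc⟩ := compress (Fin n → I) (cubeCutoff n) r.1 k (fun y hy =>
      ⟨x, hx, ((hr y).trans (p.2 _ (cubeStretch_one_of_cutoff_ne y hy))).symm⟩)
    have hfix : ∀ t, ∀ y ∈ Cube.boundary (Fin n), Q (t, y) = r.1 y := fun t y hy =>
      hQc t y (cubeCutoff_boundary y hy)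
    refine ⟨Quotient.mk _ ⟨q, fun y hy => hf ?_⟩, Quotient.sound (GenLoop.Homotopic.symm
      (hpr.trans ⟨?_⟩))⟩
    · rw [← hQ1, hfix 1 y hy, r.2 y hy]; rfl
    · exact
        { toContinuousMap := Q
          map_zero_left := hQ0
          map_one_left := hQ1
          prop' := hfix }

/-! ### Deformations and transport -/

/-- A closed cofibration has a neighborhood which deforms into it inside the ambient space. The
deformation is read off from a retraction of `M × I` onto `M × {0} ∪ A × I`. -/
lemma exists_deformation {M : Type u} [TopologicalSpace M] {A : Set M}
    (hA : ClosedCofibration A) :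
    ∃ h : C(M × I, M), (∀ x, h (x, 0) = x) ∧ (∀ x ∈ A, ∀ t, h (x, t) = x) ∧
      ∃ O, IsOpen O ∧ A ⊆ O ∧ ∀ x ∈ O, h (x, 1) ∈ A := by
  let Z : Set (M × I) := {z | z.2 = 0 ∨ z.1 ∈ A}
  obtain ⟨r, hr0, hrA⟩ := hA.2 Z ⟨fun x => ⟨(x, 0), Or.inl rfl⟩, by fun_prop⟩
    ⟨fun z => ⟨(z.1.1, z.2), Or.inr z.1.2⟩, by fun_prop⟩ (fun a => rfl)
  refine ⟨⟨fun z => (r z).1.1, by fun_prop⟩, fun x => ?_, fun x hx t => ?_,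
    {x | (r (x, 1)).1.2 ≠ 0}, ?_, fun x hx => ?_, fun x hx => ?_⟩
  · simp [hr0]
  · simp [hrA ⟨x, hx⟩ t]
  · exact isOpen_ne_fun (by fun_prop) continuous_const
  · simp [hrA ⟨x, hx⟩ 1]
  · exact (r (x, 1)).2.resolve_left hx

/-- Over a trivializing open set the points of the total space can be moved continuously between
fibers. -/
lemma exists_local_transport {E M F : Type u} [TopologicalSpace E] [TopologicalSpace M]
    [TopologicalSpace F] {π : E → M} (hπ : IsFiberBundle F π) (x₀ : M) :
    ∃ W : Set M, IsOpen W ∧ x₀ ∈ W ∧ ∃ tr : M × E → E, ContinuousOn tr (W ×ˢ (π ⁻¹' W)) ∧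
      (∀ x ∈ W, ∀ e, π e ∈ W → π (tr (x, e)) = x) ∧ ∀ e, π e ∈ W → tr (π e, e) = e := by
  classical
  obtain ⟨W, hW, hx₀, φ, hφ⟩ := hπ.locTriv x₀
  refine ⟨W, hW, hx₀, fun z => if h : z.1 ∈ W ∧ π z.2 ∈ W then
    (φ.symm (⟨z.1, h.1⟩, (φ ⟨z.2, h.2⟩).2)).1 else z.2, ?_, ?_, ?_⟩
  · rw [continuousOn_iff_continuous_domRestrict]
    have : Continuous fun z : (W ×ˢ (π ⁻¹' W) : Set (M × E)) =>
        (φ.symm (⟨z.1.1, z.2.1⟩, (φ ⟨z.1.2, z.2.2⟩).2)).1 := by fun_prop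
    refine this.congr fun z => ?_
    have hz : z.1.1 ∈ W ∧ π z.1.2 ∈ W := z.2
    simp only [Set.domRestrict_apply, dif_pos hz]
  · intro x hx e he
    simp only [hx, he, and_self, dif_pos]
    rw [← hφ]
    simp
  · intro e he
    simp only [he, and_self, dif_pos]
    have h1 : (⟨π e, he⟩ : W) = (φ ⟨e, he⟩).1 := Subtype.ext (hφ ⟨e, he⟩).symm
    rw [h1]
    simp

/-- `Φ` transports continuously the fiber over `h (x, min t (θ x))` to the fiber over `x`, is the
identity at `t = 0`, and is the identity over the points of `Δ` (which `h` will leave fixed).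
The function `Φ` is total; only its values at points `(x, t, e)` with `e` over
`h (x, min t (θ x))` are meaningful. -/
structure IsTransport {E M : Type u} [TopologicalSpace E] [TopologicalSpace M] (π : E → M)
    (h : C(M × I, M)) (Δ : Set M) (θ : C(M, I)) (Φ : M × I × E → E) : Prop where
  cont : ContinuousOn Φ {z | π z.2.2 = h (z.1, min z.2.1 (θ z.1))}
  proj : ∀ x t e, π e = h (x, min t (θ x)) → π (Φ (x, t, e)) = x
  zero : ∀ x e, π e = x → Φ (x, 0, e) = e
  fixed : ∀ x ∈ Δ, ∀ t e, π e = x → Φ (x, t, e) = e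

/-- A transport along the tracks of `h` up to time `θ` extends to one up to time `max θ ρ` if the
tracks starting in the support of `ρ` stay in a trivializing open set `W`: the additional part of
the track is dealt with by the local transport `tr` over `W`. -/
lemma IsTransport.extend {E M : Type u} [TopologicalSpace E] [TopologicalSpace M] {π : E → M}
    {h : C(M × I, M)} (h0 : ∀ x, h (x, 0) = x) {Δ : Set M}
    (hΔ : ∀ x ∈ Δ, ∀ t, h (x, t) = x) {θ : C(M, I)}
    {Φ : M × I × E → E} (hΦ : IsTransport π h Δ θ Φ) {W V : Set M} (hV : IsOpen V)
    (hVW : ∀ x ∈ V, ∀ t, h (x, t) ∈ W) {tr : M × E → E} (htr : ContinuousOn tr (W ×ˢ (π ⁻¹' W)))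
    (htrπ : ∀ x ∈ W, ∀ e, π e ∈ W → π (tr (x, e)) = x)
    (htrid : ∀ e, π e ∈ W → tr (π e, e) = e) (ρ : C(M, I)) (hρ : closure {x | ρ x ≠ 0} ⊆ V) :
    ∃ Φ', IsTransport π h Δ (θ ⊔ ρ) Φ' := by
  classical
  set T := closure {x | ρ x ≠ 0} with hT
  have hθ' : ∀ x, (θ ⊔ ρ) x = max (θ x) (ρ x) := fun x => rfl
  have hθT : ∀ x, x ∉ T → (θ ⊔ ρ) x = θ x := by
    intro x hx
    have : ρ x = 0 := by
      by_contra hne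
      exact hx (subset_closure hne)
    rw [hθ', this]
    exact max_eq_left unitInterval.nonneg'
  let step : M × I × E → M × I × E := fun z => (z.1, z.2.1, tr (h (z.1, min z.2.1 (θ z.1)), z.2.2))
  let D' : Set (M × I × E) := {z | π z.2.2 = h (z.1, min z.2.1 ((θ ⊔ ρ) z.1))}
  have hmapV : ∀ z ∈ D', z.1 ∈ V → π (step z).2.2 = h (z.1, min z.2.1 (θ z.1)) := by
    intro z hz hzV
    refine htrπ _ (hVW _ hzV _) _ ?_
    rw [show π z.2.2 = _ from hz]
    exact hVW _ hzV _
  have hid : ∀ z ∈ D', z.1 ∈ V → z.1 ∉ T → step z = z := by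
    rintro ⟨x, t, e⟩ hz hzV hzT
    have hz' : π e = h (x, min t (θ x)) := by
      have := hz
      simp only [D', Set.mem_ofPred_eq, hθT x hzT] at this
      exact this
    have : tr (h (x, min t (θ x)), e) = e := by
      rw [← hz']
      exact htrid e (hz' ▸ hVW x hzV _)
    simp [step, this]
  refine ⟨fun z => if z.1 ∈ T then Φ (step z) else Φ z, ?_, ?_, ?_, ?_⟩
  · intro z hz
    by_cases hzV : z.1 ∈ V
    · have hstep : ContinuousOn step (D' ∩ {z | z.1 ∈ V}) := by
        refine continuousOn_fst.prodMk ((by fun_prop : Continuous fun z : M × I × E =>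
          z.2.1).continuousOn.prodMk (htr.comp (Continuous.continuousOn (by fun_prop)) ?_))
        rintro z ⟨hz, hzV⟩
        refine ⟨hVW _ hzV _, ?_⟩
        show π z.2.2 ∈ W
        rw [show π z.2.2 = _ from hz]
        exact hVW _ hzV _
      have hcomp : ContinuousOn (fun z => Φ (step z)) (D' ∩ {z | z.1 ∈ V}) :=
        hΦ.cont.comp hstep fun z hz => hmapV z hz.1 hz.2
      have heq : ContinuousOn (fun z => if z.1 ∈ T then Φ (step z) else Φ z)
          (D' ∩ {z | z.1 ∈ V}) := by
        refine hcomp.congr fun z hz => ?_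
        by_cases hzT : z.1 ∈ T
        · simp only [if_pos hzT]
        · simp only [if_neg hzT, hid z hz.1 hz.2 hzT]
      exact (heq z ⟨hz, hzV⟩).mono_of_mem_nhdsWithin
        (inter_mem_nhdsWithin _ ((hV.preimage continuous_fst).mem_nhds hzV))
    · have hzT : z.1 ∈ Tᶜ := fun h => hzV (hρ h)
      have hopen : IsOpen Tᶜ := isClosed_closure.isOpen_compl
      have heq : ContinuousOn (fun z => if z.1 ∈ T then Φ (step z) else Φ z)
          (D' ∩ {z | z.1 ∈ Tᶜ}) := by
        refine (hΦ.cont.mono ?_).congr fun z hz => if_neg hz.2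
        rintro z ⟨hz, hzT⟩
        have := hz
        simp only [D', Set.mem_ofPred_eq, hθT z.1 hzT] at this
        exact this
      exact (heq z ⟨hz, hzT⟩).mono_of_mem_nhdsWithin
        (inter_mem_nhdsWithin _ ((hopen.preimage continuous_fst).mem_nhds hzT))
  · intro x t e he
    by_cases hx : x ∈ T
    · simp only [if_pos hx]
      exact hΦ.proj _ _ _ (hmapV (x, t, e) he (hρ hx))
    · simp only [if_neg hx]
      rw [hθT x hx] at he
      exact hΦ.proj _ _ _ he
  · intro x e he
    by_cases hx : x ∈ T
    · simp only [if_pos hx, step]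
      have h1 : min (0 : I) (θ x) = 0 := min_eq_left unitInterval.nonneg'
      have h2 : x ∈ W := by simpa [h0] using hVW x (hρ hx) 0
      rw [h1, h0]
      have h3 : tr (x, e) = e := by rw [← he]; exact htrid e (he ▸ h2)
      rw [h3]
      exact hΦ.zero x e he
    · simp only [if_neg hx]
      exact hΦ.zero x e he
  · intro x hxΔ t e he
    by_cases hx : x ∈ T
    · simp only [if_pos hx, step]
      have h2 : x ∈ W := by simpa [h0] using hVW x (hρ hx) 0
      rw [hΔ x hxΔ]
      have h3 : tr (x, e) = e := by rw [← he]; exact htrid e (he ▸ h2)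
      rw [h3]
      exact hΦ.fixed x hxΔ t e he
    · simp only [if_neg hx]
      exact hΦ.fixed x hxΔ t e he

/-- A bump function with values in the unit interval, equal to `1` near a compact set. -/
lemma exists_bump {M : Type u} [TopologicalSpace M] [T2Space M] [LocallyCompactSpace M]
    {C V : Set M} (hC : IsCompact C) (hV : IsOpen V) (hCV : C ⊆ V) :
    ∃ ρ : C(M, I), closure {x | ρ x ≠ 0} ⊆ V ∧ ∃ O, IsOpen O ∧ C ⊆ O ∧ ∀ x ∈ O, ρ x = 1 := by
  obtain ⟨L, hL, hCL, hLV⟩ := exists_compact_between hC hV hCV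
  obtain ⟨f, hf1, -, hfV, hf⟩ := exists_continuousMap_one_of_isCompact_subset_isOpen hL hV hLV
  refine ⟨⟨fun x => ⟨f x, hf x⟩, by fun_prop⟩, ?_, interior L, isOpen_interior, hCL,
    fun x hx => Subtype.ext (hf1 (interior_subset hx))⟩
  refine Set.Subset.trans (closure_mono fun x hx => ?_) hfV
  exact fun h => hx (Subtype.ext h)

/-- Points whose track under a homotopy stays in an open set form an open set. -/
lemma isOpen_track {M : Type u} [TopologicalSpace M] (h : C(M × I, M)) {W : Set M}
    (hW : IsOpen W) : IsOpen {x | ∀ t, h (x, t) ∈ W} := by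
  rw [isOpen_iff_mem_nhds]
  intro x hx
  obtain ⟨A, B, hA, -, hxA, hB, hAB⟩ := generalized_tube_lemma (isCompact_singleton (x := x))
    (isCompact_univ (X := I)) (hW.preimage h.continuous) (by
      rintro ⟨x', t⟩ ⟨hx', -⟩
      obtain rfl : x' = x := hx'
      exact hx t)
  refine Filter.mem_of_superset (hA.mem_nhds (hxA rfl)) fun y hy t => ?_
  exact hAB ⟨hy, hB (Set.mem_univ t)⟩

/-- The transport along whole tracks exists near the compact set `Δ`, because the tracks of points
near `Δ` are short enough to stay in trivializing open sets. -/
lemma exists_transport {E M F : Type u} [TopologicalSpace E] [TopologicalSpace M]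
    [TopologicalSpace F] [T2Space M] [LocallyCompactSpace M] {π : E → M}
    (hπ : IsFiberBundle F π) {h : C(M × I, M)} (h0 : ∀ x, h (x, 0) = x) {Δ : Set M}
    (hΔc : IsCompact Δ) (hΔ : ∀ x ∈ Δ, ∀ t, h (x, t) = x) :
    ∃ θ Φ, IsTransport π h Δ θ Φ ∧ ∃ O, IsOpen O ∧ Δ ⊆ O ∧ ∀ x ∈ O, θ x = 1 := by
  have main : ∀ θ : C(M, I), (∃ Φ, IsTransport π h Δ θ Φ) →
      ∃ θ' : C(M, I), (∃ Φ, IsTransport π h Δ θ' Φ) ∧ θ ≤ θ' ∧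
        ∃ O, IsOpen O ∧ Δ ⊆ O ∧ ∀ x ∈ O, θ' x = 1 := by
    refine hΔc.induction_on (p := fun S => ∀ θ : C(M, I), (∃ Φ, IsTransport π h Δ θ Φ) →
      ∃ θ' : C(M, I), (∃ Φ, IsTransport π h Δ θ' Φ) ∧ θ ≤ θ' ∧
        ∃ O, IsOpen O ∧ S ⊆ O ∧ ∀ x ∈ O, θ' x = 1) ?_ ?_ ?_ ?_
    · exact fun θ hθ => ⟨θ, hθ, le_rfl, ∅, isOpen_empty, subset_rfl, fun x hx => hx.elim⟩
    · intro S T hST hT θ hθ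
      obtain ⟨θ', h1, h2, O, hO, hTO, h3⟩ := hT θ hθ
      exact ⟨θ', h1, h2, O, hO, hST.trans hTO, h3⟩
    · intro S T hS hT θ hθ
      obtain ⟨θ', h1, h2, O, hO, hSO, h3⟩ := hS θ hθ
      obtain ⟨θ'', h1', h2', O', hO', hTO', h3'⟩ := hT θ' h1
      refine ⟨θ'', h1', h2.trans h2', O ∪ O', hO.union hO', Set.union_subset_union hSO hTO', ?_⟩
      rintro x (hx | hx)
      · exact le_antisymm unitInterval.le_one' ((h3 x hx).symm.le.trans (h2' x))
      · exact h3' x hx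
    · intro x hx
      obtain ⟨W, hW, hxW, tr, htr, htrπ, htrid⟩ := exists_local_transport hπ x
      have hV := isOpen_track h hW
      obtain ⟨ρ, hρ, O, hO, hxO, hρO⟩ := exists_bump (isCompact_singleton (x := x)) hV (by
        rintro _ rfl t
        rw [hΔ _ hx]; exact hxW)
      refine ⟨O, mem_nhdsWithin_of_mem_nhds (hO.mem_nhds (hxO rfl)), ?_⟩
      rintro θ ⟨Φ, hΦ⟩
      refine ⟨θ ⊔ ρ, hΦ.extend h0 hΔ hV (fun _ h => h) htr htrπ htrid ρ hρ,
        le_sup_left, O, hO, subset_rfl, fun x hx => ?_⟩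
      show max (θ x) (ρ x) = 1
      rw [hρO x hx]
      exact max_eq_right unitInterval.le_one'
  obtain ⟨θ, ⟨Φ, hΦ⟩, -, hO⟩ := main (ContinuousMap.const _ 0) ⟨fun z => z.2.2,
    by fun_prop, fun x t e he => by
      simpa [min_eq_right (unitInterval.nonneg' (t := t)), h0] using he,
    fun _ _ _ => rfl, fun _ _ _ _ _ => rfl⟩
  exact ⟨θ, Φ, hΦ, hO⟩

/-! ### Compressing families of sections -/

/-- A family `p` of sections equal to `γ` on `Δ` can be deformed, through such sections, to a
family of sections equal to `γ` on a fixed neighborhood `O` of `Δ`. The cutoff function `c` on the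
parameter space makes the deformation constant where `c = 0`; where `c ≠ 1` the sections have to
agree with `γ` on a fixed neighborhood `N` of `Δ` from the start. -/
theorem compress_sections {E M F : Type u} [TopologicalSpace E] [TopologicalSpace M]
    [TopologicalSpace F] [T2Space M] [LocallyCompactSpace M] {π : E → M}
    (hπ : IsFiberBundle F π) {Δ : Set M} (hΔc : IsCompact Δ) (hΔcof : ClosedCofibration Δ)
    {U : Set M} (hΔU : Δ ⊆ U) (γ : C(U, E)) (hγ : ∀ x : U, π (γ x) = ↑x)
    {N : Set M} (hN : IsOpen N) (hΔN : Δ ⊆ N) (hNU : N ⊆ U) :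
    ∃ O, IsOpen O ∧ Δ ⊆ O ∧ ∀ (K : Type) [TopologicalSpace K] (c : C(K, I))
      (p : C(K, fixSet π γ Δ hΔU)),
      (∀ y, c y ≠ 1 → ∀ x (hx : x ∈ N), (p y).1.1 x = γ ⟨x, hNU hx⟩) →
      ∃ Q : C(I × K, fixSet π γ Δ hΔU), (∀ y, Q (0, y) = p y) ∧
        (∀ y, ∀ x ∈ O, ∀ hx : x ∈ U, (Q (1, y)).1.1 x = γ ⟨x, hx⟩) ∧
        ∀ t y, c y = 0 → Q (t, y) = p y := by
  classical
  obtain ⟨h, h0, hΔ, O₁, hO₁, hΔO₁, hO₁Δ⟩ := exists_deformation hΔcof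
  obtain ⟨θ, Φ, hΦ, O₂, hO₂, hΔO₂, hθ⟩ := exists_transport hπ h0 hΔc hΔ
  let V : Set M := O₁ ∩ O₂ ∩ {x | ∀ t, h (x, t) ∈ N}
  have hV : IsOpen V := (hO₁.inter hO₂).inter (isOpen_track h hN)
  have hΔV : Δ ⊆ V := fun x hx => ⟨⟨hΔO₁ hx, hΔO₂ hx⟩, fun t => by rw [hΔ x hx]; exact hΔN hx⟩
  have hVN : ∀ x ∈ V, ∀ t, h (x, t) ∈ N := fun x hx => hx.2
  have hVU : ∀ x ∈ V, ∀ t, h (x, t) ∈ U := fun x hx t => hNU (hx.2 t)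
  have hVx : ∀ x ∈ V, x ∈ N := fun x hx => by simpa [h0] using hVN x hx 0
  have hVθ : ∀ x ∈ V, ∀ t, min t (θ x) = t := fun x hx t => by
    rw [hθ x hx.1.2]; exact min_eq_left unitInterval.le_one'
  obtain ⟨ρ, hρ, O, hO, hΔO, hρO⟩ := exists_bump hΔc hV hΔV
  set T := closure {x | ρ x ≠ 0} with hT
  have hρT : ∀ x, x ∉ T → ρ x = 0 := fun x hx => by
    by_contra hne
    exact hx (subset_closure hne)
  refine ⟨O, hO, hΔO, ?_⟩
  intro K _ c p hp
  -- At the time `m` of the deformation the point `x` has moved along its track up to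
  -- `out m * c y`, or has moved all the way to `c y` and back to `back m * c y`.
  let out : I → I := fun m => Set.projIcc 0 1 zero_le_one (2 * (m : ℝ))
  let back : I → I := fun m => Set.projIcc 0 1 zero_le_one (2 - 2 * (m : ℝ))
  have hout : Continuous out := continuous_projIcc.comp (by fun_prop)
  have hback : Continuous back := continuous_projIcc.comp (by fun_prop)
  have hout0 : out 0 = 0 := Set.projIcc_of_le_left _ (by simp)
  have hback1 : back 1 = 0 := Set.projIcc_of_le_left _ (by simp)
  have hmid : ∀ m : I, (m : ℝ) = 1 / 2 → out m = 1 ∧ back m = 1 := fun m hm =>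
    ⟨Set.projIcc_of_right_le _ (by rw [hm]; norm_num),
      Set.projIcc_of_right_le _ (by rw [hm]; norm_num)⟩
  have hpc : Continuous fun z : K × M => (p z.1).1.1 z.2 := by fun_prop
  let a : K → M → I → E := fun y x t => Φ (x, t, (p y).1.1 (h (x, t)))
  let b : ∀ x, x ∈ V → I → E := fun x hx t => Φ (x, t, γ ⟨h (x, t), hVU x hx t⟩)
  have ha_proj : ∀ y, ∀ x ∈ V, ∀ t, π (a y x t) = x := fun y x hx t =>
    hΦ.proj _ _ _ (by rw [(p y).1.2, hVθ x hx])
  have hb_proj : ∀ x hx t, π (b x hx t) = x := fun x hx t =>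
    hΦ.proj _ _ _ (by rw [hγ, hVθ x hx])
  have ha_zero : ∀ y x, a y x 0 = (p y).1.1 x := fun y x => by
    simp only [a, h0]
    exact hΦ.zero _ _ ((p y).1.2 x)
  have hb_zero : ∀ x hx, b x hx 0 = γ ⟨x, hNU (hVx x hx)⟩ := fun x hx => by
    simp only [b, h0]
    exact hΦ.zero _ _ (hγ _)
  have ha_fix : ∀ y, ∀ x (hx : x ∈ Δ), ∀ t, a y x t = γ ⟨x, hΔU hx⟩ := fun y x hx t => by
    simp only [a, hΔ x hx]
    rw [hΦ.fixed x hx _ _ ((p y).1.2 x)]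
    exact (p y).2 x hx
  have hb_fix : ∀ x (hx : x ∈ Δ) t, b x (hΔV hx) t = γ ⟨x, hΔU hx⟩ := fun x hx t => by
    simp only [b, hΔ x hx]
    exact hΦ.fixed x hx _ _ (hγ _)
  have hab : ∀ y x hx, a y x (c y) = b x hx (c y) := fun y x hx => by
    simp only [a, b]
    by_cases hc : c y = 1
    · have hx1 : h (x, c y) ∈ Δ := by rw [hc]; exact hO₁Δ x hx.1.1
      rw [(p y).2 _ hx1]
    · rw [hp y hc _ (hVN x hx _)]
  -- The deformation over `V`.
  let R : I → K → ∀ x, x ∈ V → E := fun t y x hx =>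
    if ((t * ρ x : I) : ℝ) ≤ 1 / 2 then a y x (out (t * ρ x) * c y)
    else b x hx (back (t * ρ x) * c y)
  have hR : Continuous fun z : {z : (I × K) × M // z.2 ∈ V} => R z.1.1.1 z.1.1.2 z.1.2 z.2 := by
    refine Continuous.if_le ?_ ?_ (by fun_prop) continuous_const ?_
    · refine hΦ.cont.comp_continuous (f := fun z : {z : (I × K) × M // z.2 ∈ V} =>
        (z.1.2, out (z.1.1.1 * ρ z.1.2) * c z.1.1.2, (p z.1.1.2).1.1
          (h (z.1.2, out (z.1.1.1 * ρ z.1.2) * c z.1.1.2)))) (by fun_prop) fun z => ?_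
      exact ((p _).1.2 _).trans (by rw [hVθ _ z.2])
    · refine hΦ.cont.comp_continuous (f := fun z : {z : (I × K) × M // z.2 ∈ V} =>
        (z.1.2, back (z.1.1.1 * ρ z.1.2) * c z.1.1.2, γ
          ⟨h (z.1.2, back (z.1.1.1 * ρ z.1.2) * c z.1.1.2), hVU _ z.2 _⟩)) (by fun_prop)
          fun z => ?_
      exact (hγ _).trans (by rw [hVθ _ z.2])
    · intro z hz
      obtain ⟨h1, h2⟩ := hmid _ hz
      simp only [h1, h2, one_mul]
      exact hab _ _ z.2
  have hR_rho : ∀ t y x hx, ρ x = 0 → R t y x hx = (p y).1.1 x := fun t y x hx hρx => by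
    simp [R, hρx, hout0, ha_zero]
  let q : (I × K) × M → E := fun z => if hx : z.2 ∈ V then R z.1.1 z.1.2 z.2 hx
    else (p z.1.2).1.1 z.2
  have hqT : ∀ z : (I × K) × M, z.2 ∉ T → q z = (p z.1.2).1.1 z.2 := fun z hz => by
    simp only [q]
    split_ifs with hx
    · exact hR_rho _ _ _ hx (hρT _ hz)
    · rfl
  have hq : Continuous q := by
    rw [continuous_iff_continuousAt]
    intro z
    by_cases hz : z.2 ∈ V
    · have hVo : IsOpen {z : (I × K) × M | z.2 ∈ V} := hV.preimage continuous_snd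
      refine ContinuousOn.continuousAt (s := {z : (I × K) × M | z.2 ∈ V}) ?_ (hVo.mem_nhds hz)
      rw [continuousOn_iff_continuous_domRestrict]
      exact hR.congr fun z => (dif_pos z.2).symm
    · have hTo : IsOpen {z : (I × K) × M | z.2 ∈ Tᶜ} :=
        isClosed_closure.isOpen_compl.preimage continuous_snd
      have hzT : z.2 ∈ Tᶜ := fun h => hz (hρ h)
      have hc' : Continuous fun z : (I × K) × M => (p z.1.2).1.1 z.2 := by fun_prop
      exact hc'.continuousAt.congr (Filter.mem_of_superset (hTo.mem_nhds hzT)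
        fun z hz => (hqT z hz).symm)
  have hq_proj : ∀ z, π (q z) = z.2 := fun z => by
    simp only [q]
    split_ifs with hx
    · simp only [R]
      split_ifs
      · exact ha_proj _ _ hx _
      · exact hb_proj _ hx _
    · exact (p z.1.2).1.2 z.2
  have hq_fix : ∀ z : (I × K) × M, ∀ hx : z.2 ∈ Δ, q z = γ ⟨z.2, hΔU hx⟩ := fun z hx => by
    simp only [q, dif_pos (hΔV hx), R]
    split_ifs
    · exact ha_fix _ _ hx _
    · exact hb_fix _ hx _
  let Q' : C(I × K, C(M, E)) := ContinuousMap.curry ⟨q, hq⟩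
  refine ⟨⟨fun z => ⟨⟨Q' z, fun x => hq_proj (z, x)⟩, fun x hx => hq_fix (z, x) hx⟩,
    (Q'.continuous.subtype_mk _).subtype_mk _⟩, fun y => ?_, fun y x hxO hx => ?_,
    fun t y hc => ?_⟩
  · refine Subtype.ext (Subtype.ext (ContinuousMap.ext fun x => ?_))
    show q ((0, y), x) = _
    simp only [q]
    split_ifs with hx
    · simp [R, hout0, ha_zero]
    · rfl
  · show q ((1, y), x) = _
    have hxT : x ∈ T := subset_closure (by simp [hρO x hxO])
    have hhalf : ¬ ((1 : ℝ) ≤ 1 / 2) := by norm_num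
    simp only [q, dif_pos (hρ hxT), R, hρO x hxO, one_mul, Set.Icc.coe_one, if_neg hhalf, hback1,
      zero_mul]
    exact hb_zero x (hρ hxT)
  · refine Subtype.ext (Subtype.ext (ContinuousMap.ext fun x => ?_))
    show q ((t, y), x) = _
    simp only [q]
    split_ifs with hx
    · simp only [R, hc, mul_zero]
      split_ifs
      · exact ha_zero _ _
      · rw [hb_zero x hx, hp y (by rw [hc]; exact zero_ne_one) x (hVx x hx)]
    · rfl

/-! ### The colimit of the spaces of sections with prescribed germ -/

section Germ

variable {E M : Type u} [TopologicalSpace E] [TopologicalSpace M]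
  {π : E → M} {U : Set M} {γ : C(U, E)} {B : ℕ → Set M} {hBU : ∀ i, B i ⊆ U}

/-- The union of the stages `Γ(E, B_i, γ)`, a type synonym on which the colimit topology is
an instance (the underlying subtype already carries the subspace topology). -/
def GermSpace (π : E → M) {U : Set M} (γ : C(U, E)) (B : ℕ → Set M) (hBU : ∀ i, B i ⊆ U) :
    Type u :=
  ↥(⋃ i, fixSet π γ (B i) (hBU i))

instance : TopologicalSpace (GermSpace π γ B hBU) :=
  ⨆ i, TopologicalSpace.coinduced
    (Set.inclusion (Set.subset_iUnion (fun i => fixSet π γ (B i) (hBU i)) i)) inferInstance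

/-- The inclusion of the `i`-th stage into the colimit. -/
def GermSpace.of (i : ℕ) : C(fixSet π γ (B i) (hBU i), GermSpace π γ B hBU) :=
  ⟨Set.inclusion (Set.subset_iUnion (fun i => fixSet π γ (B i) (hBU i)) i),
    continuous_iSup_rng (i := i) continuous_coinduced_rng⟩

theorem GermSpace.of_val (i : ℕ) (s : fixSet π γ (B i) (hBU i)) :
    (GermSpace.of i s : GermSpace π γ B hBU).1 = s.1 := rfl

theorem GermSpace.isClosed_iff {D : Set (GermSpace π γ B hBU)} :
    IsClosed D ↔ ∀ i, IsClosed (GermSpace.of i ⁻¹' D) := by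
  rw [isClosed_iSup_iff]
  exact forall_congr' fun i => isClosed_coinduced

/-- The inclusion of the colimit into the space of sections fixed on `Δ`. -/
def GermSpace.toFix {Δ : Set M} (hΔU : Δ ⊆ U) (hΔB : ∀ i, Δ ⊆ B i) :
    C(GermSpace π γ B hBU, fixSet π γ Δ hΔU) where
  toFun s := ⟨s.1, by
    obtain ⟨i, hi⟩ := Set.mem_iUnion.mp s.2
    exact fun x hx => hi x (hΔB i hx)⟩
  continuous_toFun := by
    refine continuous_iSup_dom.2 fun i => continuous_coinduced_dom.2 ?_
    exact continuous_subtype_val.subtype_mk _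

theorem GermSpace.continuous_val :
    Continuous (fun s : GermSpace π γ B hBU => (s.1 : SectionSpace π)) :=
  continuous_iSup_dom.2 fun _ => continuous_coinduced_dom.2 continuous_subtype_val

theorem GermSpace.exists_stage (s : GermSpace π γ B hBU) :
    ∃ i, s.1 ∈ fixSet π γ (B i) (hBU i) := Set.mem_iUnion.mp s.2

theorem fixSet_anti {A A' : Set M} (h : A' ⊆ A) (hA : A ⊆ U) (hA' : A' ⊆ U) :
    fixSet π γ A hA ⊆ fixSet π γ A' hA' := fun _ hs x hx => hs x (h hx)

theorem section_specializes_iff {s t : SectionSpace π} : s ⤳ t ↔ ∀ x, s.1 x ⤳ t.1 x := by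
  have h : s ⤳ t ↔ s.1 ⤳ t.1 := Topology.IsInducing.subtypeVal.specializes_iff.symm
  rw [h, ← ContinuousMap.specializes_coe, specializes_pi]

/-- Pointwise specialization implies specialization in the colimit, because both sections lie in
a common stage, where the compact-open topology detects it. -/
theorem GermSpace.specializes (hB : Antitone B) {s t : GermSpace π γ B hBU}
    (h : ∀ x, s.1.1 x ⤳ t.1.1 x) : s ⤳ t := by
  obtain ⟨i, hi⟩ := s.exists_stage
  obtain ⟨j, hj⟩ := t.exists_stage
  let l := max i j
  let s' : fixSet π γ (B l) (hBU l) := ⟨s.1, fixSet_anti (hB (le_max_left _ _)) _ _ hi⟩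
  let t' : fixSet π γ (B l) (hBU l) := ⟨t.1, fixSet_anti (hB (le_max_right _ _)) _ _ hj⟩
  have h' : s' ⤳ t' := by
    rw [← Topology.IsInducing.subtypeVal.specializes_iff]
    exact section_specializes_iff.2 h
  exact h'.map (GermSpace.of l).continuous

/-- A compact family in the colimit lies in a single stage up to specialization. If the fibre is
`T₁`, specialization is equality and this is the usual statement that a compact set in a
sequential colimit along closed inclusions lies in a stage; the specialization version needs no
separation hypothesis. -/
theorem GermSpace.exists_specializes_stage (hB : Antitone B) {K : Type} [TopologicalSpace K]
    [CompactSpace K] (p : C(K, GermSpace π γ B hBU)) (k : ℕ) :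
    ∃ m, k ≤ m ∧ ∀ y, ∀ x (hx : x ∈ B m), (p y).1.1 x ⤳ γ ⟨x, hBU m hx⟩ := by
  by_contra hcon
  push Not at hcon
  choose y x hx hxy using fun l : ℕ => hcon (max l k) (le_max_right _ _)
  -- `D j` is the union of the closures, taken in the space of sections, of the points `p (y l)`
  -- with `l ≥ j`; only finitely many of them meet a given stage.
  let D : ℕ → Set (GermSpace π γ B hBU) := fun j => {s | ∃ l, j ≤ l ∧ (p (y l)).1 ⤳ s.1}
  have hlt : ∀ l i (s : GermSpace π γ B hBU), s.1 ∈ fixSet π γ (B i) (hBU i) →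
      (p (y l)).1 ⤳ s.1 → l < i := by
    intro l i s hs hsp
    by_contra hil
    have hxi : x l ∈ B i := hB ((not_lt.1 hil).trans (le_max_left l k)) (hx l)
    refine hxy l ?_
    have := section_specializes_iff.1 hsp (x l)
    rwa [hs _ hxi] at this
  have hD : ∀ j, IsClosed (D j) := fun j => by
    rw [GermSpace.isClosed_iff]
    intro i
    have : GermSpace.of i ⁻¹' D j = ⋃ l ∈ Finset.Ico j i,
        {s : fixSet π γ (B i) (hBU i) | (p (y l)).1 ⤳ s.1} := by
      ext s
      simp only [Set.mem_preimage, Set.mem_iUnion, Finset.mem_Ico, exists_prop]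
      constructor
      · rintro ⟨l, hjl, hl⟩
        exact ⟨l, ⟨hjl, hlt l i (GermSpace.of i s) s.2 hl⟩, hl⟩
      · rintro ⟨l, ⟨hjl, -⟩, hl⟩
        exact ⟨l, hjl, hl⟩
    rw [this]
    refine isClosed_biUnion_finset fun l _ => ?_
    have hcl : {s : fixSet π γ (B i) (hBU i) | (p (y l)).1 ⤳ s.1} =
        Subtype.val ⁻¹' closure {(p (y l)).1} := by
      ext s
      exact specializes_iff_mem_closure
    rw [hcl]
    exact isClosed_closure.preimage continuous_subtype_val
  obtain ⟨z, hz⟩ := IsCompact.nonempty_iInter_of_sequence_nonempty_isCompact_isClosed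
    (fun j => p ⁻¹' D j) (fun j z ⟨l, hl, h⟩ => ⟨l, (Nat.le_succ j).trans hl, h⟩)
    (fun j => ⟨y j, j, le_rfl, specializes_rfl⟩) ((hD 0).preimage p.continuous).isCompact
    (fun j => (hD j).preimage p.continuous)
  obtain ⟨i, hi⟩ := (p z).exists_stage
  obtain ⟨l, hil, hl⟩ := Set.mem_iInter.1 hz i
  exact absurd (hlt l i _ hi hl) (not_lt.2 hil)

/-- The homotopy which stays at `p` for `t < 1` and jumps at time `1` to a specialization `q` of
`p` is continuous. -/
theorem continuous_jump {K X : Type*} [TopologicalSpace K] [TopologicalSpace X] {p q : K → X}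
    (hp : Continuous p) (hq : Continuous q) (h : ∀ y, p y ⤳ q y) :
    Continuous fun z : I × K => if z.1 < 1 then p z.2 else q z.2 := by
  refine continuous_def.2 fun O hO => ?_
  have : (fun z : I × K => if z.1 < 1 then p z.2 else q z.2) ⁻¹' O =
      ({z | z.1 < 1} ∩ {z | p z.2 ∈ O}) ∪ {z | q z.2 ∈ O} := by
    ext z
    by_cases hz : z.1 < 1
    · simp only [Set.mem_preimage, hz, if_true, Set.mem_union, Set.mem_inter_iff,
        Set.mem_ofPred_eq, true_and]
      exact ⟨Or.inl, fun H => H.elim id fun H => (h z.2).mem_open hO H⟩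
    · simp [hz]
  rw [this]
  exact ((isOpen_lt continuous_fst continuous_const).inter
    (hO.preimage (hp.comp continuous_snd))).union (hO.preimage (hq.comp continuous_snd))

/-- Every compact family in the colimit deforms into a stage: replace its values over `B m` by
those of `γ`, of which they are generizations. -/
theorem GermSpace.exists_stage_deformation [LocallyCompactSpace M]
    (hγ : ∀ x : U, π (γ x) = ↑x) (hB : Antitone B) (hBc : ∀ i, IsClosed (B i)) {K : Type}
    [TopologicalSpace K] [CompactSpace K] (p : C(K, GermSpace π γ B hBU)) (k : ℕ) :
    ∃ m, k ≤ m ∧ ∃ q : C(K, GermSpace π γ B hBU), (∀ y, (q y).1 ∈ fixSet π γ (B m) (hBU m)) ∧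
      ∃ P : C(I × K, GermSpace π γ B hBU), (∀ y, P (0, y) = p y) ∧ (∀ y, P (1, y) = q y) ∧
        ∀ t y, (p y).1 ∈ fixSet π γ (B m) (hBU m) → P (t, y) = p y := by
  classical
  obtain ⟨m, hkm, hm⟩ := GermSpace.exists_specializes_stage hB p k
  have hpc : Continuous fun z : K × M => (p z.1).1.1 z.2 := by
    have h1 : Continuous fun y => (p y).1.1 :=
      continuous_subtype_val.comp (GermSpace.continuous_val.comp p.continuous)
    have h2 : Continuous fun z : K × M => (p z.1).1.1 := h1.comp continuous_fst
    exact h2.eval continuous_snd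
  let q₀ : K × M → E := fun z => if hx : z.2 ∈ B m then γ ⟨z.2, hBU m hx⟩ else (p z.1).1.1 z.2
  have hsp : ∀ z, (p z.1).1.1 z.2 ⤳ q₀ z := fun z => by
    simp only [q₀]
    split_ifs with hx
    · exact hm _ _ hx
    · exact specializes_rfl
  have hq₀ : Continuous q₀ := by
    refine continuous_def.2 fun O hO => isOpen_iff_mem_nhds.2 fun z hz => ?_
    have hp : {z' : K × M | (p z'.1).1.1 z'.2 ∈ O} ∈ 𝓝 z :=
      (hO.preimage hpc).mem_nhds ((hsp z).mem_open hO hz)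
    by_cases hx : z.2 ∈ B m
    · obtain ⟨W, hW, hWO⟩ := isOpen_induced_iff.1 (hO.preimage γ.continuous)
      have hmem : ∀ x (hx : x ∈ U), x ∈ W ↔ γ ⟨x, hx⟩ ∈ O := fun x hx =>
        Set.ext_iff.1 hWO ⟨x, hx⟩
      have hzW : z.2 ∈ W := (hmem _ (hBU m hx)).2 (by
        have : q₀ z = γ ⟨z.2, hBU m hx⟩ := dif_pos hx
        exact this ▸ hz)
      filter_upwards [hp, (hW.preimage continuous_snd).mem_nhds hzW] with z' h1 h2
      simp only [Set.mem_preimage, q₀]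
      split_ifs with hx'
      · exact (hmem _ (hBU m hx')).1 h2
      · exact h1
    · filter_upwards [hp, ((hBc m).isOpen_compl.preimage continuous_snd).mem_nhds hx] with z' h1 h2
      simp only [Set.mem_preimage, q₀]
      rw [dif_neg h2]
      exact h1
  have hq₀π : ∀ z, π (q₀ z) = z.2 := fun z => by
    simp only [q₀]
    split_ifs with hx
    · exact hγ _
    · exact (p z.1).1.2 z.2
  let q₁ : C(K, C(M, E)) := ContinuousMap.curry ⟨q₀, hq₀⟩
  let q₂ : C(K, fixSet π γ (B m) (hBU m)) :=
    ⟨fun y => ⟨⟨q₁ y, fun x => hq₀π (y, x)⟩, fun x hx => dif_pos hx⟩,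
      (q₁.continuous.subtype_mk _).subtype_mk _⟩
  let q : C(K, GermSpace π γ B hBU) := (GermSpace.of m).comp q₂
  have hqp : ∀ y, (p y).1 ∈ fixSet π γ (B m) (hBU m) → q y = p y := fun y hy => by
    refine Subtype.ext (Subtype.ext (ContinuousMap.ext fun x => ?_))
    show q₀ (y, x) = _
    simp only [q₀]
    split_ifs with hx
    · exact (hy x hx).symm
    · rfl
  refine ⟨m, hkm, q, fun y => (q₂ y).2, ⟨_, continuous_jump p.continuous q.continuous fun y =>
    GermSpace.specializes hB fun x => hsp (y, x)⟩, fun y => ?_, fun y => ?_, fun t y hy => ?_⟩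
  · simp
  · simp
  · by_cases ht : t < 1
    · simp [ht]
    · simp [ht, hqp y hy]

end Germ

/-- Let `M` be a manifold without boundary and `π : E → M` a fiber bundle with path-connected
fiber.  Let `Δ ⊆ M` be compact and contractible with `Δ ↪ M` a closed cofibration, `γ` a
section of `π` on a neighborhood `U` of `Δ`, and `B_0 ⊇ B_1 ⊇ ⋯ ⊆ U` a neighborhood basis of
`Δ` by compact contractible sets whose inclusions into `M` are closed cofibrations.  Then the
natural inclusion `Γ_g(E, Δ, γ) = colim_i Γ(E, B_i, γ) → Γ(E, Δ, γ)`, where the colimit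
carries the colimit topology, is a weak homotopy equivalence. -/
theorem germSections_toSections_isWeakHomotopyEquiv {d : ℕ} {E M F : Type u}
    [TopologicalSpace E] [TopologicalSpace M] [TopologicalSpace F]
    [ChartedSpace (EuclideanSpace ℝ (Fin d)) M] [T2Space M] [PathConnectedSpace F]
    (π : E → M) (hπ : IsFiberBundle F π)
    (Δ : Set M) (hΔc : IsCompact Δ) (hΔcon : ContractibleSpace Δ)
    (hΔcof : ClosedCofibration Δ)
    (U : Set M) (hU : IsOpen U) (hΔU : Δ ⊆ U)
    (γ : C(U, E)) (hγ : ∀ x : U, π (γ x) = ↑x)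
    (B : ℕ → Set M) (hBU : ∀ i, B i ⊆ U) (hBmono : ∀ i, B (i + 1) ⊆ B i)
    (hBnbhd : ∀ i, Δ ⊆ interior (B i))
    (hBbasis : ∀ V : Set M, IsOpen V → Δ ⊆ V → ∃ i, B i ⊆ V)
    (hBcomp : ∀ i, IsCompact (B i)) (hBcon : ∀ i, ContractibleSpace (B i))
    (hBcof : ∀ i, ClosedCofibration (B i)) :
    -- the colimit topology on `Γ_g(E, Δ, γ) = ⋃ i, Γ(E, B_i, γ)`
    let tg : TopologicalSpace ↥(⋃ i, fixSet π γ (B i) (hBU i)) :=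
      ⨆ i, TopologicalSpace.coinduced
        (Set.inclusion (Set.subset_iUnion (fun i => fixSet π γ (B i) (hBU i)) i)) inferInstance
    -- the natural inclusion `Γ_g(E, Δ, γ) → Γ(E, Δ, γ)`
    @IsWeakHomotopyEquiv _ _ tg _
      (fun s : ↥(⋃ i, fixSet π γ (B i) (hBU i)) =>
        (⟨s.1, by
          obtain ⟨i, hi⟩ := Set.mem_iUnion.mp s.2
          exact fun x hx => hi x (interior_subset (hBnbhd i hx))⟩ :
          ↥(fixSet π γ Δ hΔU))) := by
  have : LocallyCompactSpace M :=
    ChartedSpace.locallyCompactSpace (EuclideanSpace ℝ (Fin d)) M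
  intro tg
  have hB : Antitone B := antitone_nat_of_succ_le hBmono
  let f : C(GermSpace π γ B hBU, fixSet π γ Δ hΔU) :=
    GermSpace.toFix hΔU fun i => (hBnbhd i).trans interior_subset
  refine isWeakHomotopyEquiv_of_compress f ?_
    (fun k => {s : GermSpace π γ B hBU | s.1 ∈ fixSet π γ (B k) (hBU k)}) ?_ ?_ ?_ ?_
  · exact fun s t h => Subtype.ext (congrArg (fun r => r.1) h)
  · exact fun i j hij s hs => fixSet_anti (hB hij) _ _ hs
  · exact fun s => s.exists_stage
  · exact fun K _ _ p k =>
      GermSpace.exists_stage_deformation hγ hB (fun i => (hBcof i).1) p k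
  · intro K _ c p k hp
    have hNU : interior (B k) ⊆ U := interior_subset.trans (hBU k)
    obtain ⟨O, hO, hΔO, H⟩ :=
      compress_sections hπ hΔc hΔcof hΔU γ hγ isOpen_interior (hBnbhd k) hNU
    obtain ⟨Q, hQ0, hQ1, hQc⟩ := H K c p fun y hy x hx => by
      obtain ⟨s, hs, hsp⟩ := hp y hy
      rw [← hsp]
      exact hs x (interior_subset hx)
    obtain ⟨m, hm⟩ := hBbasis O hO hΔO
    let q : C(K, fixSet π γ (B m) (hBU m)) :=
      ⟨fun y => ⟨(Q (1, y)).1, fun x hx => hQ1 y x (hm hx) (hBU m hx)⟩, by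
        refine Continuous.subtype_mk ?_ _
        exact continuous_subtype_val.comp (Q.continuous.comp (by fun_prop))⟩
    exact ⟨(GermSpace.of m).comp q, Q, hQ0, fun y => Subtype.ext rfl, hQc⟩
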